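/- (Conditional Carathéodory criterion.) Let X be a stable set of functions on Ω and μ* : P(X) → L̄⁰₊ a stable outer measure. Then the collection 𝒳(μ*) of all stably μ*-measurable conditional subsets is a stable σ-algebra, and the restriction of μ* to 𝒳(μ*) is a stable measure. -/

import Mathlib

/-!
Common framework for conditional set theory and conditional measure theory
in the sense of Drapeau–Jamneshan–Karliczek–Kupper, specialized to the
measure algebra associated to a probability space `(Ω, F, P)`.

Functions on `Ω` are identified when they agree `P`-a.s., and measurable sets
are identified when their symmetric difference is a null set.  Conditional
subsets of a stable set `X` are represented by raw pairs `(V, A)` consisting of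
a set of functions and a (measurable) base set; all notions are formulated with
respect to the almost-sure identifications via the relations `cle` and `ceq`.
-/

open MeasureTheory Filter Set Topology
open scoped ENNReal

noncomputable section

namespace CondMT

variable {Ω E F' : Type*}

/-- A countable partition of `Ω` into measurable sets (modulo `P`-null sets). -/
structure Partition {Ω : Type*} (mΩ : MeasurableSpace Ω) (P : @Measure Ω mΩ) where
  part : ℕ → Set Ω
  meas : ∀ k, MeasurableSet[mΩ] (part k)
  disj : ∀ i j, i ≠ j → P (part i ∩ part j) = 0
  cover : P ((⋃ k, part k)ᶜ) = 0

variable {mΩ : MeasurableSpace Ω}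

open Classical in
/-- The concatenation `∑ x_k|A_k` of a sequence of functions along a partition:
the (a.s. unique) function equal to `x_k` on `A_k` for every `k`. -/
def Partition.concat {P : @Measure Ω mΩ} (A : Partition mΩ P) (x : ℕ → Ω → E) : Ω → E :=
  fun ω => if h : ∃ k, ω ∈ A.part k then x (Nat.find h) ω else x 0 ω

/-- A stable set of functions on `Ω`: nonempty, closed under a.s. modification and
closed under countable concatenations along partitions. -/
def Stable (P : @Measure Ω mΩ) (X : Set (Ω → E)) : Prop :=
  X.Nonempty ∧ (∀ x ∈ X, ∀ y, x =ᵐ[P] y → y ∈ X) ∧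
    ∀ (A : Partition mΩ P) (x : ℕ → Ω → E), (∀ k, x k ∈ X) → A.concat x ∈ X

/-- Raw data of a conditional subset `V|A`: the carrier `V` and the base set `A`. -/
abbrev CondRaw (Ω E : Type*) := Set (Ω → E) × Set Ω

/-- `S` represents a conditional subset of the stable set `X`: the carrier is a
stable subset of `X` and the base is measurable. -/
def IsCond (P : @Measure Ω mΩ) (X : Set (Ω → E)) (S : CondRaw Ω E) : Prop :=
  Stable P S.1 ∧ S.1 ⊆ X ∧ MeasurableSet[mΩ] S.2

/-- Conditional inclusion `V|A ⊑ W|B`: `A ⊆ B` a.s., and every `x|A`, `x ∈ V`,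
coincides a.s. on `A` with some `y|A`, `y ∈ W`. -/
def cle (P : @Measure Ω mΩ) (S T : CondRaw Ω E) : Prop :=
  P (S.2 \ T.2) = 0 ∧ ∀ x ∈ S.1, ∃ y ∈ T.1, ∀ᵐ ω ∂P, ω ∈ S.2 → x ω = y ω

/-- Identification of conditional subsets (equality in the conditional power set). -/
def ceq (P : @Measure Ω mΩ) (S T : CondRaw Ω E) : Prop := cle P S T ∧ cle P T S

/-- `x|C ∈ V|C`: the restriction of `x` to `C` agrees a.s. on `C` with an element of `V`. -/
def memOn (P : @Measure Ω mΩ) (C : Set Ω) (x : Ω → E) (V : Set (Ω → E)) : Prop :=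
  ∃ y ∈ V, ∀ᵐ ω ∂P, ω ∈ C → x ω = y ω

/-- `∑ V_k|A_k`, the set of concatenations of sequences taken from the `V_k`. -/
def concatSet (P : @Measure Ω mΩ) (A : Partition mΩ P) (V : ℕ → Set (Ω → E)) :
    Set (Ω → E) :=
  {f | ∃ x : ℕ → Ω → E, (∀ k, x k ∈ V k) ∧ f =ᵐ[P] A.concat x}

/-- Countable concatenation `∑ (V_k|B_k)|A_k := (∑ V_k|A_k)|⋃ (A_k ∩ B_k)` in the
conditional power set. -/
def condConcat (P : @Measure Ω mΩ) (A : Partition mΩ P) (S : ℕ → CondRaw Ω E) :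
    CondRaw Ω E :=
  (concatSet P A fun k => (S k).1, ⋃ k, A.part k ∩ (S k).2)

/-- Restriction `(V|A)|B := V|(A ∩ B)`. -/
def crestrict (S : CondRaw Ω E) (B : Set Ω) : CondRaw Ω E := (S.1, S.2 ∩ B)

/-- The degenerate conditional subset `X|∅ = {∗}`, the least element of `P(X)`. -/
def cbot (X : Set (Ω → E)) : CondRaw Ω E := (X, (∅ : Set Ω))

/-- The greatest element `X = X|Ω` of `P(X)`. -/
def ctop (X : Set (Ω → E)) : CondRaw Ω E := (X, (univ : Set Ω))

/-- `a` is a supremum (conditional union) of the family `s` in `(P(X), ⊑)`. -/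
def IsSupOf (P : @Measure Ω mΩ) (X : Set (Ω → E)) (s : Set (CondRaw Ω E))
    (a : CondRaw Ω E) : Prop :=
  IsCond P X a ∧ (∀ b ∈ s, cle P b a) ∧
    ∀ c, IsCond P X c → (∀ b ∈ s, cle P b c) → cle P a c

/-- `a` is an infimum (conditional intersection) of the family `s` in `(P(X), ⊑)`. -/
def IsInfOf (P : @Measure Ω mΩ) (X : Set (Ω → E)) (s : Set (CondRaw Ω E))
    (a : CondRaw Ω E) : Prop :=
  IsCond P X a ∧ (∀ b ∈ s, cle P a b) ∧
    ∀ c, IsCond P X c → (∀ b ∈ s, cle P c b) → cle P c a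

open Classical in
/-- The conditional union (supremum) of a family of conditional subsets. -/
def cSup (P : @Measure Ω mΩ) (X : Set (Ω → E)) (s : Set (CondRaw Ω E)) : CondRaw Ω E :=
  if h : ∃ a, IsSupOf P X s a then h.choose else ctop X

open Classical in
/-- The conditional intersection (infimum) of a family of conditional subsets. -/
def cInf (P : @Measure Ω mΩ) (X : Set (Ω → E)) (s : Set (CondRaw Ω E)) : CondRaw Ω E :=
  if h : ∃ a, IsInfOf P X s a then h.choose else ctop X

/-- Binary conditional union. -/
def cSup₂ (P : @Measure Ω mΩ) (X : Set (Ω → E)) (a b : CondRaw Ω E) : CondRaw Ω E :=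
  cSup P X {a, b}

/-- Binary conditional intersection. -/
def cInf₂ (P : @Measure Ω mΩ) (X : Set (Ω → E)) (a b : CondRaw Ω E) : CondRaw Ω E :=
  cInf P X {a, b}

/-- Conditional union of an indexed family. -/
def cSupFam (P : @Measure Ω mΩ) (X : Set (Ω → E)) {ι : Sort*}
    (S : ι → CondRaw Ω E) : CondRaw Ω E :=
  cSup P X (range S)

/-- Conditional intersection of an indexed family. -/
def cInfFam (P : @Measure Ω mΩ) (X : Set (Ω → E)) {ι : Sort*}
    (S : ι → CondRaw Ω E) : CondRaw Ω E :=
  cInf P X (range S)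

/-- Disjointness of conditional subsets: `V|A ⊓ W|B = {∗}`. -/
def cdisjoint (P : @Measure Ω mΩ) (X : Set (Ω → E)) (a b : CondRaw Ω E) : Prop :=
  ceq P (cInf₂ P X a b) (cbot X)

/-- The conditional complement `(V|A)^⊏ := ⊔ {W|B : W|B ⊓ V|A = {∗}}`. -/
def ccompl (P : @Measure Ω mΩ) (X : Set (Ω → E)) (a : CondRaw Ω E) : CondRaw Ω E :=
  cSup P X {b | IsCond P X b ∧ cdisjoint P X b a}

open Classical in
/-- The largest measurable set (mod null sets) satisfying a property `Φ`,
obtained by an exhaustion argument; junk value `∅` if there is none. -/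
def largestSet (P : @Measure Ω mΩ) (Φ : Set Ω → Prop) : Set Ω :=
  if h : ∃ C, MeasurableSet[mΩ] C ∧ Φ C ∧
      ∀ C', MeasurableSet[mΩ] C' → Φ C' → P (C' \ C) = 0
  then h.choose else ∅

open Classical in
/-- The smallest measurable set (mod null sets) satisfying a property `Φ`. -/
def smallestSet (P : @Measure Ω mΩ) (Φ : Set Ω → Prop) : Set Ω :=
  if h : ∃ C, MeasurableSet[mΩ] C ∧ Φ C ∧
      ∀ C', MeasurableSet[mΩ] C' → Φ C' → P (C \ C') = 0
  then h.choose else univ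

/-- Essential infimum `inf_i A_i` of a family of measurable sets in the measure algebra. -/
def essInfFam (P : @Measure Ω mΩ) {ι : Sort*} (A : ι → Set Ω) : Set Ω :=
  largestSet P fun C => ∀ i, P (C \ A i) = 0

/-- Essential supremum `sup_i A_i` of a family of measurable sets in the measure algebra. -/
def essSupFam (P : @Measure Ω mΩ) {ι : Sort*} (A : ι → Set Ω) : Set Ω :=
  smallestSet P fun C => ∀ i, P (A i \ C) = 0

/-- A stable collection: a nonempty, `ceq`-saturated family of conditional subsets of `X`
closed under countable concatenations. -/
def IsStableColl (P : @Measure Ω mΩ) (X : Set (Ω → E)) (𝒞 : Set (CondRaw Ω E)) : Prop :=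
  𝒞.Nonempty ∧ (∀ S ∈ 𝒞, IsCond P X S) ∧
    (∀ S ∈ 𝒞, ∀ T, IsCond P X T → ceq P S T → T ∈ 𝒞) ∧
    ∀ (A : Partition mΩ P) (S : ℕ → CondRaw Ω E), (∀ k, S k ∈ 𝒞) → condConcat P A S ∈ 𝒞

/-- A stable σ-algebra on `X`. -/
def IsStableSigma (P : @Measure Ω mΩ) (X : Set (Ω → E)) (𝒳 : Set (CondRaw Ω E)) : Prop :=
  IsStableColl P X 𝒳 ∧ ctop X ∈ 𝒳 ∧ (∀ S ∈ 𝒳, ccompl P X S ∈ 𝒳) ∧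
    ∀ S : ℕ → CondRaw Ω E, (∀ k, S k ∈ 𝒳) → cSupFam P X S ∈ 𝒳

/-- A stable Dynkin system on `X`. -/
def IsStableDynkin (P : @Measure Ω mΩ) (X : Set (Ω → E)) (𝒟 : Set (CondRaw Ω E)) : Prop :=
  IsStableColl P X 𝒟 ∧ ctop X ∈ 𝒟 ∧ (∀ S ∈ 𝒟, ccompl P X S ∈ 𝒟) ∧
    ∀ S : ℕ → CondRaw Ω E, (∀ k, S k ∈ 𝒟) →
      (∀ i j, i ≠ j → cdisjoint P X (S i) (S j)) → cSupFam P X S ∈ 𝒟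

/-- A stable ring on `X`. -/
def IsStableRing (P : @Measure Ω mΩ) (X : Set (Ω → E)) (𝒳 : Set (CondRaw Ω E)) : Prop :=
  IsStableColl P X 𝒳 ∧
    ∀ S ∈ 𝒳, ∀ T ∈ 𝒳, cInf₂ P X S (ccompl P X T) ∈ 𝒳 ∧ cSup₂ P X S T ∈ 𝒳

/-- The stable σ-algebra generated by a collection `ℰ`. -/
def sigmaGen (P : @Measure Ω mΩ) (X : Set (Ω → E)) (ℰ : Set (CondRaw Ω E)) :
    Set (CondRaw Ω E) :=
  ⋂₀ {𝒳 | IsStableSigma P X 𝒳 ∧ ℰ ⊆ 𝒳}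

/-- The stable Dynkin system generated by a collection `ℰ`. -/
def dynkinGen (P : @Measure Ω mΩ) (X : Set (Ω → E)) (ℰ : Set (CondRaw Ω E)) :
    Set (CondRaw Ω E) :=
  ⋂₀ {𝒟 | IsStableDynkin P X 𝒟 ∧ ℰ ⊆ 𝒟}

/-! ### Stable set functions and stable measures -/

/-- A stable set function `μ : 𝒞 → L̄⁰₊` (represented by measurable representatives,
well defined modulo identification, and commuting with countable concatenations). -/
def IsStableSetFun (P : @Measure Ω mΩ) (𝒞 : Set (CondRaw Ω E))
    (μ : CondRaw Ω E → Ω → ℝ≥0∞) : Prop :=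
  (∀ S ∈ 𝒞, Measurable[mΩ] (μ S)) ∧
    (∀ S ∈ 𝒞, ∀ T ∈ 𝒞, ceq P S T → μ S =ᵐ[P] μ T) ∧
    ∀ (A : Partition mΩ P) (S : ℕ → CondRaw Ω E), (∀ k, S k ∈ 𝒞) →
      μ (condConcat P A S) =ᵐ[P] A.concat fun k => μ (S k)

/-- Property (M1): `μ(V|A) = μ(V|A)|A + 0|Aᶜ`. -/
def M1 (P : @Measure Ω mΩ) (𝒞 : Set (CondRaw Ω E)) (μ : CondRaw Ω E → Ω → ℝ≥0∞) : Prop :=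
  ∀ S ∈ 𝒞, μ S =ᵐ[P] S.2.indicator (μ S)

/-- Property (M2): countable additivity on pairwise disjoint sequences whose
conditional union belongs to the domain. -/
def M2 (P : @Measure Ω mΩ) (X : Set (Ω → E)) (𝒳 : Set (CondRaw Ω E))
    (μ : CondRaw Ω E → Ω → ℝ≥0∞) : Prop :=
  ∀ S : ℕ → CondRaw Ω E, (∀ k, S k ∈ 𝒳) →
    (∀ i j, i ≠ j → cdisjoint P X (S i) (S j)) → cSupFam P X S ∈ 𝒳 →
    μ (cSupFam P X S) =ᵐ[P] fun ω => ∑' k, μ (S k) ω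

/-- Finite additivity: (M2) for finite pairwise disjoint families. -/
def FinAdd (P : @Measure Ω mΩ) (X : Set (Ω → E)) (𝒳 : Set (CondRaw Ω E))
    (μ : CondRaw Ω E → Ω → ℝ≥0∞) : Prop :=
  ∀ (n : ℕ) (S : Fin n → CondRaw Ω E), (∀ k, S k ∈ 𝒳) →
    (∀ i j, i ≠ j → cdisjoint P X (S i) (S j)) → cSupFam P X S ∈ 𝒳 →
    μ (cSupFam P X S) =ᵐ[P] fun ω => ∑ k, μ (S k) ω

/-- A stable measure (or stable pre-measure, when the domain is merely a stable
ring): a stable set function satisfying (M1) and (M2). -/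
def IsStableMeasureOn (P : @Measure Ω mΩ) (X : Set (Ω → E)) (𝒳 : Set (CondRaw Ω E))
    (μ : CondRaw Ω E → Ω → ℝ≥0∞) : Prop :=
  IsStableSetFun P 𝒳 μ ∧ M1 P 𝒳 μ ∧ M2 P X 𝒳 μ

/-- A finite stable measure. -/
def IsFiniteStableMeasureOn (P : @Measure Ω mΩ) (X : Set (Ω → E))
    (𝒳 : Set (CondRaw Ω E)) (μ : CondRaw Ω E → Ω → ℝ≥0∞) : Prop :=
  IsStableMeasureOn P X 𝒳 μ ∧ ∀ᵐ ω ∂P, μ (ctop X) ω < ∞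

/-- A stable probability measure. -/
def IsStableProbOn (P : @Measure Ω mΩ) (X : Set (Ω → E)) (𝒳 : Set (CondRaw Ω E))
    (μ : CondRaw Ω E → Ω → ℝ≥0∞) : Prop :=
  IsStableMeasureOn P X 𝒳 μ ∧ μ (ctop X) =ᵐ[P] fun _ => (1 : ℝ≥0∞)

/-- A stable outer measure on the conditional power set of `X`. -/
def IsStableOuter (P : @Measure Ω mΩ) (X : Set (Ω → E))
    (μ : CondRaw Ω E → Ω → ℝ≥0∞) : Prop :=
  (∀ S, IsCond P X S → Measurable[mΩ] (μ S)) ∧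
    (∀ S T, IsCond P X S → IsCond P X T → ceq P S T → μ S =ᵐ[P] μ T) ∧
    (∀ (A : Partition mΩ P) (S : ℕ → CondRaw Ω E), (∀ k, IsCond P X (S k)) →
      μ (condConcat P A S) =ᵐ[P] A.concat fun k => μ (S k)) ∧
    (∀ S, IsCond P X S → ∀ B, MeasurableSet[mΩ] B →
      μ (crestrict S B) =ᵐ[P] B.indicator (μ S)) ∧
    (∀ S T, IsCond P X S → IsCond P X T → cle P S T → ∀ᵐ ω ∂P, μ S ω ≤ μ T ω) ∧
    ∀ S : ℕ → CondRaw Ω E, (∀ k, IsCond P X (S k)) →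
      ∀ᵐ ω ∂P, μ (cSupFam P X S) ω ≤ ∑' k, μ (S k) ω

/-- Stable Carathéodory measurability with respect to a stable outer measure. -/
def CaraMeasurable (P : @Measure Ω mΩ) (X : Set (Ω → E))
    (μ : CondRaw Ω E → Ω → ℝ≥0∞) (S : CondRaw Ω E) : Prop :=
  ∀ T, IsCond P X T →
    (fun ω => μ (cInf₂ P X T S) ω + μ (cInf₂ P X T (ccompl P X S)) ω) =ᵐ[P] μ T

/-! ### Stable functions, the stable Borel σ-algebra on `L⁰`, and the integral -/

/-- The stable set `L⁰_m(E)` of all (classes of) measurable functions `Ω → E`. -/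
def l0m (P : @Measure Ω mΩ) (E : Type*) [MeasurableSpace E] : Set (Ω → E) :=
  {x | AEMeasurable x P}

/-- A stable function between stable sets of functions. -/
def StableFun (P : @Measure Ω mΩ) (X : Set (Ω → E)) (Y : Set (Ω → F'))
    (f : (Ω → E) → Ω → F') : Prop :=
  (∀ x ∈ X, f x ∈ Y) ∧ (∀ x ∈ X, ∀ y ∈ X, x =ᵐ[P] y → f x =ᵐ[P] f y) ∧
    ∀ (A : Partition mΩ P) (x : ℕ → Ω → E), (∀ k, x k ∈ X) →
      f (A.concat x) =ᵐ[P] A.concat fun k => f (x k)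

/-- The conditional preimage `f⁻¹(W|A)`. -/
def cPreimage (P : @Measure Ω mΩ) (X : Set (Ω → E)) (f : (Ω → E) → Ω → F')
    (W : CondRaw Ω F') : CondRaw Ω E :=
  ({x ∈ X | memOn P (largestSet P fun C => P (C \ W.2) = 0 ∧ ∃ x ∈ X, memOn P C (f x) W.1)
      (f x) W.1},
    largestSet P fun C => P (C \ W.2) = 0 ∧ ∃ x ∈ X, memOn P C (f x) W.1)

/-- The stable Borel σ-algebra `B(L⁰)` on `L⁰`, generated by the stable open balls. -/
def borelL0 (P : @Measure Ω mΩ) : Set (CondRaw Ω ℝ) :=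
  sigmaGen P (l0m P ℝ)
    {S | ∃ r ε : Ω → ℝ, AEMeasurable r P ∧ AEMeasurable ε P ∧ (∀ᵐ ω ∂P, 0 < ε ω) ∧
      ceq P S ({s | AEMeasurable s P ∧ ∀ᵐ ω ∂P, |s ω - r ω| < ε ω}, univ)}

/-- A stably measurable function `f : X → L⁰` with respect to a stable σ-algebra `𝒳`. -/
def StablyMeasurable (P : @Measure Ω mΩ) (X : Set (Ω → E)) (𝒳 : Set (CondRaw Ω E))
    (f : (Ω → E) → Ω → ℝ) : Prop :=
  StableFun P X (l0m P ℝ) f ∧ ∀ W ∈ borelL0 P, cPreimage P X f W ∈ 𝒳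

/-- The base set `A_x` of the stable indicator function of `S = V|A` at `x`. -/
def indBase (P : @Measure Ω mΩ) (S : CondRaw Ω E) (x : Ω → E) : Set Ω :=
  largestSet P fun C => P (C \ S.2) = 0 ∧ memOn P C x S.1

/-- The stable indicator function `1_{V|A} : X → L⁰`. -/
def cIndicator (P : @Measure Ω mΩ) (S : CondRaw Ω E) (x : Ω → E) : Ω → ℝ :=
  (indBase P S x).indicator fun _ => (1 : ℝ)

/-- Data of a stable elementary function: coefficients and conditional sets. -/
def ElemRep (Ω E : Type*) := Σ n : ℕ, (Fin n → Ω → ℝ) × (Fin n → CondRaw Ω E)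

/-- The function `∑_{k ≤ n} r_k 1_{V_k|A_k}` represented by `ρ`. -/
def repFun (P : @Measure Ω mΩ) (ρ : ElemRep Ω E) : (Ω → E) → Ω → ℝ :=
  fun x ω => ∑ k, ρ.2.1 k ω * cIndicator P (ρ.2.2 k) x ω

/-- The representation `ρ` is admissible: nonnegative `L⁰`-coefficients and a finite
pairwise disjoint family in `𝒳` whose conditional union is `X`. -/
def GoodRep (P : @Measure Ω mΩ) (X : Set (Ω → E)) (𝒳 : Set (CondRaw Ω E))
    (ρ : ElemRep Ω E) : Prop :=
  (∀ k, AEMeasurable (ρ.2.1 k) P) ∧ (∀ k, ∀ᵐ ω ∂P, 0 ≤ ρ.2.1 k ω) ∧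
    (∀ k, ρ.2.2 k ∈ 𝒳) ∧ (∀ i j, i ≠ j → cdisjoint P X (ρ.2.2 i) (ρ.2.2 j)) ∧
    ceq P (cSupFam P X ρ.2.2) (ctop X)

/-- A stable elementary function. -/
def IsElementary (P : @Measure Ω mΩ) (X : Set (Ω → E)) (𝒳 : Set (CondRaw Ω E))
    (f : (Ω → E) → Ω → ℝ) : Prop :=
  ∃ ρ : ElemRep Ω E, GoodRep P X 𝒳 ρ ∧ ∀ x ∈ X, f x =ᵐ[P] repFun P ρ x

/-- The stable Lebesgue integral `∑_k r_k μ(V_k|A_k)` of the elementary representation. -/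
def repInt (μ : CondRaw Ω E → Ω → ℝ≥0∞) (ρ : ElemRep Ω E) : Ω → ℝ≥0∞ :=
  fun ω => ∑ k, ENNReal.ofReal (ρ.2.1 k ω) * μ (ρ.2.2 k) ω

/-- The stable Lebesgue integral of a nonnegative function, as the supremum of the
integrals of the dominated stable elementary functions. -/
def cIntNN (P : @Measure Ω mΩ) (X : Set (Ω → E)) (𝒳 : Set (CondRaw Ω E))
    (μ : CondRaw Ω E → Ω → ℝ≥0∞) (f : (Ω → E) → Ω → ℝ) : Ω → ℝ≥0∞ :=
  fun ω =>
    ⨆ ρ : {ρ : ElemRep Ω E // GoodRep P X 𝒳 ρ ∧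
        ∀ x ∈ X, ∀ᵐ ω' ∂P, repFun P ρ x ω' ≤ f x ω'},
      repInt μ ρ.1 ω

/-- The positive part `f⁺` of an `L⁰`-valued function. -/
def fplus (f : (Ω → E) → Ω → ℝ) : (Ω → E) → Ω → ℝ := fun x ω => max (f x ω) 0

/-- The negative part `f⁻` of an `L⁰`-valued function. -/
def fminus (f : (Ω → E) → Ω → ℝ) : (Ω → E) → Ω → ℝ := fun x ω => max (-(f x ω)) 0

/-- Stable integrability of `f : X → L⁰`. -/
def CIntegrable (P : @Measure Ω mΩ) (X : Set (Ω → E)) (𝒳 : Set (CondRaw Ω E))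
    (μ : CondRaw Ω E → Ω → ℝ≥0∞) (f : (Ω → E) → Ω → ℝ) : Prop :=
  StablyMeasurable P X 𝒳 f ∧ (∀ᵐ ω ∂P, cIntNN P X 𝒳 μ (fplus f) ω < ∞) ∧
    ∀ᵐ ω ∂P, cIntNN P X 𝒳 μ (fminus f) ω < ∞

/-- The stable Lebesgue integral `∫_X f dμ := ∫ f⁺ dμ − ∫ f⁻ dμ`. -/
def cInt (P : @Measure Ω mΩ) (X : Set (Ω → E)) (𝒳 : Set (CondRaw Ω E))
    (μ : CondRaw Ω E → Ω → ℝ≥0∞) (f : (Ω → E) → Ω → ℝ) : Ω → ℝ :=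
  fun ω => (cIntNN P X 𝒳 μ (fplus f) ω).toReal - (cIntNN P X 𝒳 μ (fminus f) ω).toReal

/-! ### Products and sections -/

/-- The pairing `ω ↦ (x ω, y ω)`. -/
def pairFn (x : Ω → E) (y : Ω → F') : Ω → E × F' := fun ω => (x ω, y ω)

/-- The Cartesian product `X × Y` of two stable sets, as a stable set of functions
`Ω → E × F'`. -/
def prodSet (P : @Measure Ω mΩ) (X : Set (Ω → E)) (Y : Set (Ω → F')) :
    Set (Ω → E × F') :=
  {z | ∃ x ∈ X, ∃ y ∈ Y, z =ᵐ[P] pairFn x y}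

/-- The conditional rectangle `V|A × W|B := (V × W)|A ∩ B`. -/
def crect (P : @Measure Ω mΩ) (S : CondRaw Ω E) (T : CondRaw Ω F') :
    CondRaw Ω (E × F') :=
  (prodSet P S.1 T.1, S.2 ∩ T.2)

/-- The stable product σ-algebra `𝒳 ⊗ 𝒴`, generated by the conditional rectangles. -/
def prodSigma (P : @Measure Ω mΩ) (X : Set (Ω → E)) (Y : Set (Ω → F'))
    (𝒳 : Set (CondRaw Ω E)) (𝒴 : Set (CondRaw Ω F')) : Set (CondRaw Ω (E × F')) :=
  sigmaGen P (prodSet P X Y) {R | ∃ S ∈ 𝒳, ∃ T ∈ 𝒴, ceq P R (crect P S T)}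

/-- The conditional `x`-section `(Z|C)_x` of a conditional subset of `X × Y`. -/
def xsection (P : @Measure Ω mΩ) (Y : Set (Ω → F')) (Z : CondRaw Ω (E × F'))
    (x : Ω → E) : CondRaw Ω F' :=
  ({y ∈ Y | memOn P (largestSet P fun D => P (D \ Z.2) = 0 ∧ ∃ y ∈ Y, memOn P D (pairFn x y) Z.1)
      (pairFn x y) Z.1},
    largestSet P fun D => P (D \ Z.2) = 0 ∧ ∃ y ∈ Y, memOn P D (pairFn x y) Z.1)

/-- The conditional `y`-section `(Z|C)_y` of a conditional subset of `X × Y`. -/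
def ysection (P : @Measure Ω mΩ) (X : Set (Ω → E)) (Z : CondRaw Ω (E × F'))
    (y : Ω → F') : CondRaw Ω E :=
  ({x ∈ X | memOn P (largestSet P fun D => P (D \ Z.2) = 0 ∧ ∃ x ∈ X, memOn P D (pairFn x y) Z.1)
      (pairFn x y) Z.1},
    largestSet P fun D => P (D \ Z.2) = 0 ∧ ∃ x ∈ X, memOn P D (pairFn x y) Z.1)

/-! ### Conditional subsets of `L⁰_m(E)` associated to measurable sets -/

/-- `L⁰_m(F) = {x ∈ L⁰_m(E) : x ∈ F a.s.}` for a measurable `F ⊆ E`. -/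
def l0mF (P : @Measure Ω mΩ) {E : Type*} [MeasurableSpace E] (F : Set E) : Set (Ω → E) :=
  {x | AEMeasurable x P ∧ ∀ᵐ ω ∂P, x ω ∈ F}

/-- `∑ L⁰_m(F_k)|A_k = {x ∈ L⁰_m(E) : x ∈ F_k a.s. on A_k for all k}`. -/
def l0mConcat (P : @Measure Ω mΩ) {E : Type*} [MeasurableSpace E]
    (A : Partition mΩ P) (F : ℕ → Set E) : Set (Ω → E) :=
  {x | AEMeasurable x P ∧ ∀ k, ∀ᵐ ω ∂P, ω ∈ A.part k → x ω ∈ F k}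

/-- The stable ring `ℛ` on `L⁰_m(E)` generated by a measurable structure on `E`:
all conditional subsets of the form `(∑ L⁰_m(F_k)|A_k)|B`. -/
def ringR (P : @Measure Ω mΩ) (E : Type*) [MeasurableSpace E] : Set (CondRaw Ω E) :=
  {S | ∃ (F : ℕ → Set E) (A : Partition mΩ P) (B : Set Ω),
    (∀ k, MeasurableSet (F k)) ∧ MeasurableSet[mΩ] B ∧
      ceq P S (l0mConcat P A F, B)}

end CondMT

/-!
A conditional subset `S` of `X` is determined by its truth set `{(x, ω) | x(ω) ∈ S}`, up to sections
that agree almost surely, and the truth sets form a σ-algebra: that of the *local* sets `Z`, for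
which `(x, ω) ∈ Z` depends, for almost every `ω ∈ C`, only on the restriction of `x` to `C`. Under
this correspondence the order and the operations of the conditional power set become inclusion and
the set operations, and a stable outer measure becomes an outer measure `m` with values in `L̄⁰₊`.
Integration over `B` turns `m` into the scalar outer measures `Z ↦ ∫_B m(Z) dP`, to which the
classical Carathéodory theorem applies; as these integrals determine `m(Z)` almost surely, both
conclusions descend to `m`.
-/

namespace CondMT

section Filter

variable {α : Type*} {l : Filter α} {A B C : Set α}

theorem eventuallyLE_inter_iff : C ≤ᶠ[l] (A ∩ B : Set α) ↔ C ≤ᶠ[l] A ∧ C ≤ᶠ[l] B := by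
  refine Iff.trans ?_ eventually_and
  exact eventually_congr (.of_forall fun _ => forall_and)

theorem inter_eventuallyEq_empty_iff : (A ∩ B : Set α) =ᶠ[l] (∅ : Set α) ↔ A ≤ᶠ[l] Bᶜ := by
  rw [eventuallyEq_empty]
  exact eventually_congr (.of_forall fun _ => not_and)

theorem iUnion_eventuallyLE_iff {ι : Sort*} [Countable ι] [CountableInterFilter l] {A : ι → Set α} :
    (⋃ k, A k : Set α) ≤ᶠ[l] B ↔ ∀ k, A k ≤ᶠ[l] B := by
  refine Iff.trans ?_ eventually_countable_forall
  exact eventually_congr (.of_forall fun _ => (imp_congr_left mem_iUnion).trans exists_imp)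

end Filter

section RandomOuterMeasure

theorem isCaratheodory_iUnion_eq_tsum_of_null_inter {α : Type*} {μ : OuterMeasure α}
    {Z : ℕ → Set α} (hZ : ∀ k, μ.IsCaratheodory (Z k))
    (hd : Pairwise fun i j => μ (Z i ∩ Z j) = 0) : μ (⋃ k, Z k) = ∑' k, μ (Z k) := by
  let _ : MeasurableSpace α := μ.caratheodory
  have hZ' k : MeasurableSet (Z k) := hZ k
  have h_disj : Pairwise (Function.onFun (AEDisjoint (μ.toMeasure le_rfl)) Z) := fun i j hij =>
    (toMeasure_apply _ _ ((hZ' i).inter (hZ' j))).trans (hd hij)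
  have h_sum := measure_iUnion₀ h_disj fun k => (hZ' k).nullMeasurableSet
  rw [toMeasure_apply _ _ (.iUnion hZ')] at h_sum
  exact h_sum.trans (tsum_congr fun k => toMeasure_apply _ _ (hZ' k))

variable {α Ω : Type*} {mα : MeasurableSpace α} {mΩ : MeasurableSpace Ω} {P : Measure Ω}

/-- An outer measure on the σ-algebra `mα` with values in `L̄⁰₊`, given by representatives: the
axioms hold `P`-almost surely, with an exceptional set that may depend on the sets involved. -/
structure RandomOuterMeasure {α Ω : Type*} (mα : MeasurableSpace α) {mΩ : MeasurableSpace Ω}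
    (P : Measure Ω) where
  toFun : Set α → Ω → ℝ≥0∞
  measurable {Z : Set α} : MeasurableSet Z → Measurable (toFun Z)
  empty : toFun ∅ =ᵐ[P] 0
  mono {Z W : Set α} : MeasurableSet Z → MeasurableSet W → Z ⊆ W → toFun Z ≤ᵐ[P] toFun W
  iUnion_le {Z : ℕ → Set α} : (∀ k, MeasurableSet (Z k)) →
    toFun (⋃ k, Z k) ≤ᵐ[P] fun ω => ∑' k, toFun (Z k) ω

namespace RandomOuterMeasure

instance : CoeFun (RandomOuterMeasure mα P) fun _ => Set α → Ω → ℝ≥0∞ := ⟨toFun⟩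

/-- The Carathéodory criterion for `Z`, tested almost surely on the measurable sets. -/
def IsCaratheodory (m : RandomOuterMeasure mα P) (Z : Set α) : Prop :=
  ∀ W, MeasurableSet W → m (W ∩ Z) + m (W \ Z) =ᵐ[P] m W

variable [SFinite P] (m : RandomOuterMeasure mα P) {Z : Set α}

/-- The scalar outer measure `Z ↦ ∫_B m(Z) dP`. The `s`-finite measure `P` is replaced by an
equivalent finite one, so that these integrals, for varying `B`, determine `m(Z)`. -/
def setLIntegral (B : Set Ω) : OuterMeasure α :=
  inducedOuterMeasure (P := fun Z => MeasurableSet Z)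
    (fun Z _ => ∫⁻ ω in B, m Z ω ∂P.toFinite) .empty <| by
      rw [lintegral_congr_ae (ae_restrict_of_ae ((toFinite_absolutelyContinuous P).ae_eq m.empty))]
      exact lintegral_zero

theorem lintegral_toFun_mono (B : Set Ω) {Z W : Set α} (hZ : MeasurableSet Z) (hW : MeasurableSet W)
    (hZW : Z ⊆ W) : ∫⁻ ω in B, m Z ω ∂P.toFinite ≤ ∫⁻ ω in B, m W ω ∂P.toFinite :=
  lintegral_mono_ae <| ae_restrict_of_ae <|
    (toFinite_absolutelyContinuous P).ae_le (m.mono hZ hW hZW)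

theorem lintegral_toFun_iUnion_le (B : Set Ω) {Z : ℕ → Set α} (hZ : ∀ k, MeasurableSet (Z k)) :
    ∫⁻ ω in B, m (⋃ k, Z k) ω ∂P.toFinite ≤ ∑' k, ∫⁻ ω in B, m (Z k) ω ∂P.toFinite := by
  rw [← lintegral_tsum fun k => (m.measurable (hZ k)).aemeasurable]
  exact lintegral_mono_ae <| ae_restrict_of_ae <|
    (toFinite_absolutelyContinuous P).ae_le (m.iUnion_le hZ)

theorem setLIntegral_apply (B : Set Ω) (hZ : MeasurableSet Z) :
    m.setLIntegral B Z = ∫⁻ ω in B, m Z ω ∂P.toFinite :=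
  inducedOuterMeasure_eq' (P := fun Z => MeasurableSet Z) (fun _ h => .iUnion h)
    (fun _ => m.lintegral_toFun_iUnion_le B) (fun _ _ => m.lintegral_toFun_mono B) hZ

theorem isCaratheodory_setLIntegral_iff (B : Set Ω) :
    (m.setLIntegral B).IsCaratheodory Z ↔ ∀ W, MeasurableSet W →
      m.setLIntegral B (W ∩ Z) + m.setLIntegral B (W \ Z) ≤ m.setLIntegral B W :=
  inducedOuterMeasure_caratheodory (P := fun Z => MeasurableSet Z) (fun _ h => .iUnion h)
    (fun _ => m.lintegral_toFun_iUnion_le B) (fun _ _ => m.lintegral_toFun_mono B) Z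

theorem isCaratheodory_iff_forall_setLIntegral (hZ : MeasurableSet Z) :
    m.IsCaratheodory Z ↔ ∀ B, (m.setLIntegral B).IsCaratheodory Z := by
  have h_add (B W : Set _) (hW : MeasurableSet W) :
      m.setLIntegral B (W ∩ Z) + m.setLIntegral B (W \ Z) =
        ∫⁻ ω in B, (m (W ∩ Z) + m (W \ Z)) ω ∂P.toFinite := by
    rw [m.setLIntegral_apply B (hW.inter hZ), m.setLIntegral_apply B (hW.diff hZ)]
    exact (lintegral_add_left (m.measurable (hW.inter hZ)) _).symm
  refine ⟨fun h B => (m.isCaratheodory_setLIntegral_iff B).2 fun W hW => ?_, fun h W hW => ?_⟩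
  · have h_eq := (toFinite_absolutelyContinuous P).ae_eq (h W hW)
    rw [h_add B W hW, m.setLIntegral_apply B hW]
    exact (lintegral_congr_ae (ae_restrict_of_ae h_eq)).le
  · rw [← ae_toFinite (μ := P)]
    refine ae_eq_of_forall_setLIntegral_eq_of_sigmaFinite
      ((m.measurable (hW.inter hZ)).add (m.measurable (hW.diff hZ))) (m.measurable hW)
      fun B _ _ => ?_
    rw [← h_add B W hW, ← m.setLIntegral_apply B hW, ← h B W]

/-- The σ-algebra of the Carathéodory measurable sets in `mα`. -/
@[reducible] def caratheodory : MeasurableSpace α :=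
  mα ⊓ ⨅ B : Set Ω, (m.setLIntegral B).caratheodory

theorem measurableSet_caratheodory_iff :
    MeasurableSet[m.caratheodory] Z ↔ MeasurableSet[mα] Z ∧ m.IsCaratheodory Z := by
  rw [caratheodory, MeasurableSpace.measurableSet_inf, MeasurableSpace.measurableSet_iInf]
  exact and_congr_right fun hZ => (m.isCaratheodory_iff_forall_setLIntegral hZ).symm

theorem iUnion_ae_eq_tsum {Z : ℕ → Set α} (hZ : ∀ k, MeasurableSet[m.caratheodory] (Z k))
    (hd : Pairwise fun i j => m (Z i ∩ Z j) =ᵐ[P] 0) :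
    m (⋃ k, Z k) =ᵐ[P] fun ω => ∑' k, m (Z k) ω := by
  have hmα k : MeasurableSet (Z k) := (m.measurableSet_caratheodory_iff.1 (hZ k)).1
  rw [← ae_toFinite (μ := P)]
  refine ae_eq_of_forall_setLIntegral_eq_of_sigmaFinite
    (m.measurable (.iUnion hmα)) (.tsum fun k => m.measurable (hmα k)) fun B _ _ => ?_
  have h_null : Pairwise fun i j => m.setLIntegral B (Z i ∩ Z j) = 0 := fun i j hij => by
    have h_zero := (toFinite_absolutelyContinuous P).ae_eq (hd hij)
    calc m.setLIntegral B (Z i ∩ Z j)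
      _ = ∫⁻ ω in B, m (Z i ∩ Z j) ω ∂P.toFinite :=
        m.setLIntegral_apply B ((hmα i).inter (hmα j))
      _ = ∫⁻ _ in B, 0 ∂P.toFinite := lintegral_congr_ae (ae_restrict_of_ae h_zero)
      _ = 0 := lintegral_zero
  rw [← m.setLIntegral_apply B (.iUnion hmα),
    lintegral_tsum fun k => (m.measurable (hmα k)).aemeasurable,
    isCaratheodory_iUnion_eq_tsum_of_null_inter (fun k =>
      (m.isCaratheodory_iff_forall_setLIntegral (hmα k)).1
        (m.measurableSet_caratheodory_iff.1 (hZ k)).2 B) h_null]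
  exact tsum_congr fun k => m.setLIntegral_apply B (hmα k)

end RandomOuterMeasure

end RandomOuterMeasure

section Partition

variable {Ω E : Type*} {mΩ : MeasurableSpace Ω} {P : Measure Ω}

theorem Partition.ae_existsUnique_mem_part (A : Partition mΩ P) :
    ∀ᵐ ω ∂P, ∃! k, ω ∈ A.part k := by
  have h_cover : ∀ᵐ ω ∂P, ω ∈ ⋃ k, A.part k := A.cover
  have h_disj : ∀ᵐ ω ∂P, ∀ i j, i ≠ j → ω ∉ A.part i ∩ A.part j :=
    ae_all_iff.2 fun i => ae_all_iff.2 fun j => ae_all_iff.2 fun hij =>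
      measure_eq_zero_iff_ae_notMem.1 (A.disj i j hij)
  filter_upwards [h_cover, h_disj] with ω h_mem h_unique
  obtain ⟨k, hk⟩ := mem_iUnion.1 h_mem
  exact ⟨k, hk, fun j hj => by_contra fun hjk => h_unique j k hjk ⟨hj, hk⟩⟩

theorem Partition.ae_iff_forall_part (A : Partition mΩ P) {p : Ω → Prop} :
    (∀ᵐ ω ∂P, p ω) ↔ ∀ k, ∀ᵐ ω ∂P, ω ∈ A.part k → p ω := by
  refine ⟨fun h k => h.mono fun ω hω _ => hω, fun h => ?_⟩
  filter_upwards [ae_all_iff.2 h, A.ae_existsUnique_mem_part] with ω hω h_unique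
  obtain ⟨k, hk, -⟩ := h_unique
  exact hω k hk

theorem Partition.ae_concat_eq (A : Partition mΩ P) (x : ℕ → Ω → E) (k : ℕ) :
    ∀ᵐ ω ∂P, ω ∈ A.part k → A.concat x ω = x k ω := by
  classical
  filter_upwards [A.ae_existsUnique_mem_part] with ω h_unique hk
  have h_exists : ∃ k, ω ∈ A.part k := ⟨k, hk⟩
  rw [concat, dif_pos h_exists, h_unique.unique (Nat.find_spec h_exists) hk]

theorem Partition.ae_le_iUnion_part_inter_iff (A : Partition mΩ P) {C : Set Ω} {D : ℕ → Set Ω} :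
    C ≤ᵐ[P] ⋃ k, A.part k ∩ D k ↔ ∀ k, (C ∩ A.part k : Set Ω) ≤ᵐ[P] D k := by
  refine ⟨fun h k => ?_, fun h => ?_⟩
  · filter_upwards [h, A.ae_existsUnique_mem_part] with ω hω h_unique ⟨hC, hk⟩
    obtain ⟨j, hj, hD⟩ := mem_iUnion.1 (hω hC)
    rwa [h_unique.unique hk hj]
  · refine A.ae_iff_forall_part.2 fun k => ?_
    filter_upwards [h k] with ω hω hk hC
    exact mem_iUnion.2 ⟨k, hk, hω ⟨hC, hk⟩⟩

theorem exists_partition_subordinate (C : ℕ → Set Ω) (hC : ∀ k, MeasurableSet (C k)) :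
    ∃ A : Partition mΩ P, ∀ k, A.part k ∩ ⋃ j, C j ⊆ C k := by
  let D k := C k ∪ (⋃ j, C j)ᶜ
  have hD k : MeasurableSet (D k) := (hC k).union (MeasurableSet.iUnion hC).compl
  have hD_univ : ⋃ k, D k = univ := by
    rw [← iUnion_union, union_compl_self]
  refine ⟨⟨disjointed D, .disjointed hD, fun i j hij => ?_, ?_⟩, fun k ω hω => ?_⟩
  · rw [(disjoint_disjointed D hij).inter_eq, measure_empty]
  · rw [iUnion_disjointed, hD_univ, compl_univ, measure_empty]
  · exact (disjointed_subset D k hω.1).resolve_right fun h => h hω.2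

end Partition

section Exhaustion

variable {Ω : Type*} {mΩ : MeasurableSpace Ω} {P : Measure Ω}

theorem exists_measurableSet_forall_ae_le [SFinite P] {Φ : Set Ω → Prop} (h_empty : Φ ∅)
    (h_iUnion : ∀ C : ℕ → Set Ω, (∀ k, MeasurableSet (C k)) → (∀ k, Φ (C k)) → Φ (⋃ k, C k)) :
    ∃ M, MeasurableSet M ∧ Φ M ∧ ∀ C, MeasurableSet C → Φ C → C ≤ᵐ[P] M := by
  let s := P.toFinite '' {C | MeasurableSet C ∧ Φ C}
  have hs : s.Nonempty := ⟨_, ∅, ⟨.empty, h_empty⟩, rfl⟩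
  obtain ⟨u, -, hu_tendsto, hu_mem⟩ := exists_seq_tendsto_sSup hs (OrderTop.bddAbove s)
  choose C hC hCu using hu_mem
  have hM : MeasurableSet (⋃ k, C k) := .iUnion fun k => (hC k).1
  refine ⟨⋃ k, C k, hM, h_iUnion C (fun k => (hC k).1) fun k => (hC k).2, fun D hD hΦD => ?_⟩
  have h_mem : MeasurableSet (D ∪ ⋃ k, C k) ∧ Φ (D ∪ ⋃ k, C k) := by
    let C' : ℕ → Set Ω := fun k => Nat.casesOn k D C
    have hC' k : MeasurableSet (C' k) ∧ Φ (C' k) := by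
      cases k with
      | zero => exact ⟨hD, hΦD⟩
      | succ k => exact hC k
    rw [show D ∪ ⋃ k, C k = ⋃ k, C' k from union_iUnion_nat_succ C']
    exact ⟨.iUnion fun k => (hC' k).1, h_iUnion C' (fun k => (hC' k).1) fun k => (hC' k).2⟩
  have h_sup : sSup s ≤ P.toFinite (⋃ k, C k) :=
    le_of_tendsto' hu_tendsto fun k => hCu k ▸ measure_mono (subset_iUnion C k)
  have h_eq : (⋃ k, C k : Set Ω) =ᵐ[P.toFinite] (D ∪ ⋃ k, C k : Set Ω) :=
    ae_eq_of_subset_of_measure_ge subset_union_right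
      ((le_sSup (mem_image_of_mem P.toFinite h_mem)).trans h_sup) hM.nullMeasurableSet
      (measure_ne_top _ _)
  filter_upwards [(absolutelyContinuous_toFinite P).ae_eq h_eq] with ω hω hD
  exact hω.mpr (.inl hD)

theorem largestSet_spec [SFinite P] {Φ : Set Ω → Prop} (h_empty : Φ ∅)
    (h_iUnion : ∀ C : ℕ → Set Ω, (∀ k, MeasurableSet (C k)) → (∀ k, Φ (C k)) → Φ (⋃ k, C k)) :
    MeasurableSet (largestSet P Φ) ∧ Φ (largestSet P Φ) ∧
      ∀ C, MeasurableSet C → Φ C → C ≤ᵐ[P] largestSet P Φ := by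
  have h_exists : ∃ M, MeasurableSet M ∧ Φ M ∧ ∀ C, MeasurableSet C → Φ C → P (C \ M) = 0 := by
    simpa only [ae_le_set] using exists_measurableSet_forall_ae_le (P := P) h_empty h_iUnion
  simp only [ae_le_set, largestSet, dif_pos h_exists]
  exact h_exists.choose_spec

end Exhaustion

section Stable

variable {Ω E : Type*} {mΩ : MeasurableSpace Ω} {P : Measure Ω} {C D : Set Ω} {x : Ω → E}
  {V X : Set (Ω → E)}

theorem memOn.mono (h : memOn P D x V) (hCD : C ≤ᵐ[P] D) : memOn P C x V := by
  obtain ⟨y, hy, hxy⟩ := h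
  refine ⟨y, hy, ?_⟩
  filter_upwards [hxy, hCD] with ω hω hωCD hC using hω (hωCD hC)

theorem Stable.memOn_univ_iff (hV : Stable P V) : memOn P univ x V ↔ x ∈ V := by
  refine ⟨fun ⟨y, hy, hxy⟩ => hV.2.1 y hy x ?_, fun hx => ⟨x, hx, .of_forall fun _ _ => rfl⟩⟩
  filter_upwards [hxy] with ω hω using (hω (mem_univ ω)).symm

theorem Stable.memOn_iUnion (hV : Stable P V) {C : ℕ → Set Ω} (hC : ∀ k, MeasurableSet (C k))
    (h : ∀ k, memOn P (C k) x V) : memOn P (⋃ k, C k) x V := by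
  obtain ⟨A, hA⟩ := exists_partition_subordinate (P := P) C hC
  choose y hy hxy using h
  refine ⟨A.concat y, hV.2.2 A y hy, A.ae_iff_forall_part.2 fun k => ?_⟩
  filter_upwards [hxy k, A.ae_concat_eq y k] with ω hω h_concat hk h_mem
  rw [hω (hA k ⟨hk, h_mem⟩), h_concat hk]

open Classical in
theorem Stable.piecewise_mem (hV : Stable P V) (hC : MeasurableSet C) {y : Ω → E} (hx : x ∈ V)
    (hy : y ∈ V) : C.piecewise x y ∈ V := by
  let C' : ℕ → Set Ω := fun k => Nat.casesOn k C fun _ => Cᶜ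
  have hC'_univ : ⋃ k, C' k = univ := by
    rw [← union_iUnion_nat_succ, ← union_compl_self C]
    exact congrArg (C ∪ ·) (iUnion_const Cᶜ)
  rw [← hV.memOn_univ_iff, ← hC'_univ]
  refine hV.memOn_iUnion (fun k => ?_) fun k => ?_
  · cases k with
    | zero => exact hC
    | succ => exact hC.compl
  · cases k with
    | zero => exact ⟨x, hx, .of_forall fun ω hω => piecewise_eq_of_mem C x y hω⟩
    | succ => exact ⟨y, hy, .of_forall fun ω hω => piecewise_eq_of_notMem C x y hω⟩

theorem memOn_concatSet_iff (A : Partition mΩ P) (V : ℕ → Set (Ω → E)) :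
    memOn P C x (concatSet P A V) ↔ ∀ k, memOn P (C ∩ A.part k) x (V k) := by
  constructor
  · rintro ⟨y, ⟨z, hz, hyz⟩, hxy⟩ k
    refine ⟨z k, hz k, ?_⟩
    filter_upwards [hyz, hxy, A.ae_concat_eq z k] with ω h_yz h_xy h_concat ⟨hC, hk⟩
    rw [h_xy hC, h_yz, h_concat hk]
  · intro h
    choose z hz hxz using h
    refine ⟨A.concat z, ⟨z, hz, .rfl⟩, A.ae_iff_forall_part.2 fun k => ?_⟩
    filter_upwards [hxz k, A.ae_concat_eq z k] with ω h_xz h_concat hk hC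
    rw [h_xz ⟨hC, hk⟩, h_concat hk]

theorem stable_concatSet (A : Partition mΩ P) {V : ℕ → Set (Ω → E)} (hV : ∀ k, Stable P (V k)) :
    Stable P (concatSet P A V) := by
  refine ⟨?_, fun x ⟨z, hz, hxz⟩ y hxy => ⟨z, hz, hxy.symm.trans hxz⟩, fun B x hx => ?_⟩
  · choose z hz using fun k => (hV k).1
    exact ⟨A.concat z, z, hz, .rfl⟩
  · choose z hz hxz using hx
    refine ⟨fun k => B.concat fun j => z j k, fun k => (hV k).2.2 B _ fun j => hz j k,
      A.ae_iff_forall_part.2 fun k => B.ae_iff_forall_part.2 fun j => ?_⟩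
    filter_upwards [hxz j, B.ae_concat_eq x j, A.ae_concat_eq (z j) k,
      A.ae_concat_eq (fun k => B.concat fun j => z j k) k, B.ae_concat_eq (fun j => z j k) j]
      with ω h₁ h₂ h₃ h₄ h₅ hj hk
    rw [h₂ hj, h₁, h₃ hk, h₄ hk, h₅ hj]

end Stable

section LocalSets

variable {Ω E : Type*} {mΩ : MeasurableSpace Ω} {P : Measure Ω} {X : Set (Ω → E)}
  {Z : Set ((Ω → E) × Ω)} {B : Set Ω}

/-- The filter of the subsets of `(Ω → E) × Ω` almost all of whose `x`-section is full, for every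
`x ∈ X`. Truth sets of conditional subsets of `X` are identified along this filter. -/
def sectionAE (P : Measure Ω) (X : Set (Ω → E)) : Filter ((Ω → E) × Ω) :=
  ⨆ x ∈ X, (ae P).map (Prod.mk x)

theorem eventually_sectionAE {p : (Ω → E) × Ω → Prop} :
    (∀ᶠ z in sectionAE P X, p z) ↔ ∀ x ∈ X, ∀ᵐ ω ∂P, p (x, ω) := by
  simp only [sectionAE, eventually_iSup, eventually_map]

instance : CountableInterFilter (sectionAE P X) where
  countable_sInter_mem S hS h := by
    have h_ae : ∀ x ∈ X, ∀ᵐ ω ∂P, ∀ s ∈ S, (x, ω) ∈ s := fun x hx =>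
      (ae_ball_iff hS).2 fun s hs => eventually_sectionAE.1 (h s hs) x hx
    exact eventually_sectionAE.2 h_ae

/-- The σ-algebra of the subsets of `(Ω → E) × Ω` that have measurable sections over `X` and are
local: whether `(x, ω)` belongs to the set depends, for almost every `ω ∈ C`, only on the
restriction of `x` to `C`. -/
@[reducible] def localMeasurableSpace (P : Measure Ω) (X : Set (Ω → E)) :
    MeasurableSpace ((Ω → E) × Ω) where
  MeasurableSet' Z := (∀ x ∈ X, MeasurableSet (Prod.mk x ⁻¹' Z)) ∧
    ∀ x ∈ X, ∀ y ∈ X, ∀ C, MeasurableSet C → (∀ᵐ ω ∂P, ω ∈ C → x ω = y ω) →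
      ∀ᵐ ω ∂P, ω ∈ C → ((x, ω) ∈ Z ↔ (y, ω) ∈ Z)
  measurableSet_empty := ⟨fun _ _ => .empty, fun _ _ _ _ _ _ _ => .of_forall fun _ _ => .rfl⟩
  measurableSet_compl Z hZ := by
    refine ⟨fun x hx => (hZ.1 x hx).compl, fun x hx y hy C hC hxy => ?_⟩
    filter_upwards [hZ.2 x hx y hy C hC hxy] with ω hω h_mem using (hω h_mem).not
  measurableSet_iUnion Z hZ := by
    refine ⟨fun x hx => ?_, fun x hx y hy C hC hxy => ?_⟩
    · rw [preimage_iUnion]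
      exact .iUnion fun k => (hZ k).1 x hx
    · filter_upwards [ae_all_iff.2 fun k => (hZ k).2 x hx y hy C hC hxy] with ω hω h_mem
      simp only [mem_iUnion, fun k => hω k h_mem]

theorem measurableSet_section (hZ : MeasurableSet[localMeasurableSpace P X] Z) {x : Ω → E}
    (hx : x ∈ X) : MeasurableSet (Prod.mk x ⁻¹' Z) :=
  hZ.1 x hx

theorem ae_mem_section_iff (hZ : MeasurableSet[localMeasurableSpace P X] Z) {x y : Ω → E}
    (hx : x ∈ X) (hy : y ∈ X) {C : Set Ω} (hC : MeasurableSet C)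
    (hxy : ∀ᵐ ω ∂P, ω ∈ C → x ω = y ω) : ∀ᵐ ω ∂P, ω ∈ C → ((x, ω) ∈ Z ↔ (y, ω) ∈ Z) :=
  hZ.2 x hx y hy C hC hxy

theorem measurableSet_snd_preimage (hB : MeasurableSet B) :
    MeasurableSet[localMeasurableSpace P X] (Prod.snd ⁻¹' B) :=
  ⟨fun _ _ => hB, fun _ _ _ _ _ _ _ => .of_forall fun _ _ => .rfl⟩

end LocalSets

section TruthSet

variable {Ω E : Type*} {mΩ : MeasurableSpace Ω} {P : Measure Ω} {X : Set (Ω → E)}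
  {S T : CondRaw Ω E} {Z W : Set ((Ω → E) × Ω)}

/-- `S` is a conditional subset of `X` whose truth set `{(x, ω) | x(ω) ∈ S}` is `Z`. As `x(ω) ∈ S`
only makes sense almost surely, the section of `Z` at `x` is characterized as the largest measurable
set on which `x` belongs to `S`. -/
structure Represents (P : Measure Ω) (X : Set (Ω → E)) (S : CondRaw Ω E)
    (Z : Set ((Ω → E) × Ω)) : Prop where
  isCond : IsCond P X S
  measurableSet : MeasurableSet[localMeasurableSpace P X] Z
  ae_le_iff {x : Ω → E} {C : Set Ω} : x ∈ X → MeasurableSet C →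
    (C ≤ᵐ[P] Prod.mk x ⁻¹' Z ↔ C ≤ᵐ[P] S.2 ∧ memOn P C x S.1)

/-- The truth set `{(x, ω) | x(ω) ∈ S}` of a conditional subset. -/
def truthSet (P : Measure Ω) (S : CondRaw Ω E) : Set ((Ω → E) × Ω) :=
  {z | z.2 ∈ indBase P S z.1}

theorem cle.ae_le_and_memOn (h : cle P S T) {x : Ω → E} {C : Set Ω}
    (hx : C ≤ᵐ[P] S.2 ∧ memOn P C x S.1) : C ≤ᵐ[P] T.2 ∧ memOn P C x T.1 := by
  obtain ⟨hCS, y, hy, hxy⟩ := hx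
  obtain ⟨z, hz, hyz⟩ := h.2 y hy
  refine ⟨hCS.trans (ae_le_set.2 h.1), z, hz, ?_⟩
  filter_upwards [hCS, hxy, hyz] with ω h_base h_xy h_yz hω
  rw [h_xy hω, h_yz (h_base hω)]

theorem Represents.of_ceq (hS : Represents P X S Z) (hT : IsCond P X T) (h : ceq P S T) :
    Represents P X T Z :=
  ⟨hT, hS.measurableSet, fun hx hC => (hS.ae_le_iff hx hC).trans
    ⟨h.1.ae_le_and_memOn, h.2.ae_le_and_memOn⟩⟩

theorem Represents.cle_iff (hS : Represents P X S Z) (hT : Represents P X T W) :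
    cle P S T ↔ Z ≤ᶠ[sectionAE P X] W := by
  refine Iff.trans ⟨fun h x hx => ?_, fun h => ?_⟩ eventually_sectionAE.symm
  · have hZ := measurableSet_section hS.measurableSet hx
    exact (hT.ae_le_iff hx hZ).2 (h.ae_le_and_memOn ((hS.ae_le_iff hx hZ).1 .rfl))
  · have h_on {x : Ω → E} (hx : x ∈ S.1) : S.2 ≤ᵐ[P] T.2 ∧ memOn P S.2 x T.1 := by
      have hxX := hS.isCond.2.1 hx
      have hSZ := (hS.ae_le_iff hxX hS.isCond.2.2).2 ⟨.rfl, x, hx, .of_forall fun _ _ => rfl⟩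
      exact (hT.ae_le_iff hxX hS.isCond.2.2).1 (hSZ.trans (h x hxX))
    obtain ⟨x, hx⟩ := hS.isCond.1.1
    exact ⟨ae_le_set.1 (h_on hx).1, fun y hy => (h_on hy).2⟩

theorem Represents.ceq_iff (hS : Represents P X S Z) (hT : Represents P X T W) :
    ceq P S T ↔ Z =ᶠ[sectionAE P X] W := by
  rw [ceq, hS.cle_iff hT, hT.cle_iff hS]
  exact ⟨fun h => h.1.antisymm h.2, fun h => ⟨h.le, h.symm.le⟩⟩

variable [SFinite P]

theorem IsCond.indBase_spec (hS : IsCond P X S) (x : Ω → E) :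
    MeasurableSet (indBase P S x) ∧
      ∀ C, MeasurableSet C → (C ≤ᵐ[P] indBase P S x ↔ C ≤ᵐ[P] S.2 ∧ memOn P C x S.1) := by
  obtain ⟨y, hy⟩ := hS.1.1
  have h_spec := largestSet_spec (P := P) (Φ := fun C => P (C \ S.2) = 0 ∧ memOn P C x S.1)
    ⟨by rw [empty_sdiff, measure_empty], y, hy, .of_forall fun ω h => h.elim⟩ fun C hC h =>
    ⟨by rw [iUnion_sdiff, measure_iUnion_null_iff]; exact fun k => (h k).1,
      hS.1.memOn_iUnion hC fun k => (h k).2⟩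
  refine ⟨h_spec.1, fun C hC => ⟨fun h => ?_, fun h => h_spec.2.2 C hC ⟨ae_le_set.1 h.1, h.2⟩⟩⟩
  exact ⟨h.trans (ae_le_set.2 h_spec.2.1.1), h_spec.2.1.2.mono h⟩

theorem IsCond.represents_truthSet (hS : IsCond P X S) : Represents P X S (truthSet P S) := by
  refine ⟨hS, ⟨fun x _ => (hS.indBase_spec x).1, fun x _ y _ C hC hxy => ?_⟩,
    fun _ hC => (hS.indBase_spec _).2 _ hC⟩
  have h_le {x y : Ω → E} (hxy : ∀ᵐ ω ∂P, ω ∈ C → x ω = y ω) :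
      (C ∩ indBase P S x : Set Ω) ≤ᵐ[P] indBase P S y := by
    obtain ⟨hx, h_spec⟩ := hS.indBase_spec x
    obtain ⟨h_base, z, hz, hxz⟩ := (h_spec _ hx).1 .rfl
    refine ((hS.indBase_spec y).2 _ (hC.inter hx)).2 ⟨?_, z, hz, ?_⟩
    · filter_upwards [h_base] with ω hω h using hω h.2
    · filter_upwards [hxy, hxz] with ω h_xy h_xz h
      rw [← h_xy h.1, h_xz h.2]
  have hyx : ∀ᵐ ω ∂P, ω ∈ C → y ω = x ω := hxy.mono fun ω h hC => (h hC).symm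
  filter_upwards [h_le hxy, h_le hyx] with ω h h' hC
  exact ⟨fun hx => h ⟨hC, hx⟩, fun hy => h' ⟨hC, hy⟩⟩

/-- The conditional subset of `X` with truth set `Z`: its base is the largest set on which some
element of `X` has its graph in `Z`. -/
def ofTruthSet (P : Measure Ω) (X : Set (Ω → E)) (Z : Set ((Ω → E) × Ω)) : CondRaw Ω E :=
  let base := largestSet P fun C => ∃ x ∈ X, C ≤ᵐ[P] Prod.mk x ⁻¹' Z
  ({x ∈ X | base ≤ᵐ[P] Prod.mk x ⁻¹' Z}, base)

theorem Stable.ofTruthSet_snd_spec (hX : Stable P X)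
    (hZ : MeasurableSet[localMeasurableSpace P X] Z) :
    MeasurableSet (ofTruthSet P X Z).2 ∧
      (∃ x ∈ X, (ofTruthSet P X Z).2 ≤ᵐ[P] Prod.mk x ⁻¹' Z) ∧
      ∀ C, MeasurableSet C → (∃ x ∈ X, C ≤ᵐ[P] Prod.mk x ⁻¹' Z) → C ≤ᵐ[P] (ofTruthSet P X Z).2 := by
  obtain ⟨y, hy⟩ := hX.1
  refine largestSet_spec ⟨y, hy, .of_forall fun ω h => h.elim⟩ fun C hC h => ?_
  choose x hx hxC using h
  obtain ⟨A, hA⟩ := exists_partition_subordinate (P := P) C hC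
  have h_concat := hX.2.2 A x hx
  refine ⟨A.concat x, h_concat, A.ae_iff_forall_part.2 fun k => ?_⟩
  filter_upwards [hxC k, ae_mem_section_iff hZ h_concat (hx k) (A.meas k) (A.ae_concat_eq x k)]
    with ω h_mem h_iff hk hC
  exact (h_iff hk).2 (h_mem (hA k ⟨hk, hC⟩))

theorem Stable.isCond_ofTruthSet (hX : Stable P X)
    (hZ : MeasurableSet[localMeasurableSpace P X] Z) : IsCond P X (ofTruthSet P X Z) := by
  obtain ⟨h_meas, h_nonempty, -⟩ := hX.ofTruthSet_snd_spec hZ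
  refine ⟨⟨h_nonempty, fun x hx y hxy => ?_, fun A x hx => ?_⟩, fun x hx => hx.1, h_meas⟩
  · have hy := hX.2.1 x hx.1 y hxy
    refine ⟨hy, ?_⟩
    filter_upwards [hx.2, ae_mem_section_iff hZ hx.1 hy .univ (hxy.mono fun ω h _ => h)]
      with ω h_mem h_iff h
    exact (h_iff trivial).1 (h_mem h)
  · have h_concat := hX.2.2 A x fun k => (hx k).1
    refine ⟨h_concat, A.ae_iff_forall_part.2 fun k => ?_⟩
    filter_upwards [(hx k).2,
      ae_mem_section_iff hZ h_concat (hx k).1 (A.meas k) (A.ae_concat_eq x k)]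
      with ω h_mem h_iff hk h
    exact (h_iff hk).2 (h_mem h)

open Classical in
theorem Stable.represents_ofTruthSet (hX : Stable P X)
    (hZ : MeasurableSet[localMeasurableSpace P X] Z) : Represents P X (ofTruthSet P X Z) Z := by
  obtain ⟨-, ⟨x₀, hx₀, h_base⟩, h_max⟩ := hX.ofTruthSet_snd_spec hZ
  refine ⟨hX.isCond_ofTruthSet hZ, hZ, fun {x C} hx hC => ⟨fun h => ?_, ?_⟩⟩
  · have hy : C.piecewise x x₀ ∈ X := hX.piecewise_mem hC hx hx₀
    have hyx : ∀ ω ∈ C, C.piecewise x x₀ ω = x ω := fun ω => piecewise_eq_of_mem C x x₀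
    have hyx₀ : ∀ ω ∈ Cᶜ, C.piecewise x x₀ ω = x₀ ω := fun ω => piecewise_eq_of_notMem C x x₀
    refine ⟨h_max C hC ⟨x, hx, h⟩, _, ⟨hy, ?_⟩, .of_forall fun ω hω => (hyx ω hω).symm⟩
    filter_upwards [h, h_base, ae_mem_section_iff hZ hy hx hC (.of_forall hyx),
      ae_mem_section_iff hZ hy hx₀ hC.compl (.of_forall hyx₀)] with ω hxZ hx₀Z h_iff h_iff₀ hω
    by_cases hωC : ω ∈ C
    · exact (h_iff hωC).2 (hxZ hωC)
    · exact (h_iff₀ hωC).2 (hx₀Z hω)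
  · rintro ⟨hCS, y, hy, hxy⟩
    filter_upwards [hCS, hy.2, ae_mem_section_iff hZ hx hy.1 hC hxy] with ω h_base h_mem h_iff hω
    exact (h_iff hω).2 (h_mem (h_base hω))

end TruthSet

section Lattice

variable {Ω E : Type*} {mΩ : MeasurableSpace Ω} {P : Measure Ω} {X : Set (Ω → E)}
  {S T : CondRaw Ω E} {Z W : Set ((Ω → E) × Ω)}

theorem Stable.represents_ctop (hX : Stable P X) : Represents P X (ctop X) univ :=
  ⟨⟨hX, Subset.rfl, .univ⟩, @MeasurableSet.univ _ (localMeasurableSpace P X), fun hx _ =>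
    iff_of_true (.of_forall fun _ _ => trivial)
      ⟨.of_forall fun _ _ => trivial, _, hx, .of_forall fun _ _ => rfl⟩⟩

theorem Stable.represents_cbot (hX : Stable P X) : Represents P X (cbot X) ∅ :=
  ⟨⟨hX, Subset.rfl, .empty⟩, @MeasurableSet.empty _ (localMeasurableSpace P X), fun hx _ =>
    ⟨fun h => ⟨h, _, hx, .of_forall fun _ _ => rfl⟩, fun h => h.1⟩⟩

theorem Represents.crestrict (hS : Represents P X S Z) {B : Set Ω} (hB : MeasurableSet B) :
    Represents P X (crestrict S B) (Z ∩ Prod.snd ⁻¹' B) := by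
  refine ⟨⟨hS.isCond.1, hS.isCond.2.1, hS.isCond.2.2.inter hB⟩,
    hS.measurableSet.inter (measurableSet_snd_preimage hB), fun {x C} hx hC => ?_⟩
  calc C ≤ᵐ[P] (Prod.mk x ⁻¹' Z ∩ B : Set Ω)
    _ ↔ (C ≤ᵐ[P] S.2 ∧ memOn P C x S.1) ∧ C ≤ᵐ[P] B := by
      rw [eventuallyLE_inter_iff, hS.ae_le_iff hx hC]
    _ ↔ C ≤ᵐ[P] (S.2 ∩ B : Set Ω) ∧ memOn P C x S.1 := by
      rw [eventuallyLE_inter_iff, and_right_comm]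

theorem Represents.condConcat (hX : Stable P X) (A : Partition mΩ P) {S : ℕ → CondRaw Ω E}
    {Z : ℕ → Set ((Ω → E) × Ω)} (hS : ∀ k, Represents P X (S k) (Z k)) :
    Represents P X (condConcat P A S) (⋃ k, Prod.snd ⁻¹' A.part k ∩ Z k) := by
  refine ⟨?_, .iUnion fun k => (measurableSet_snd_preimage (A.meas k)).inter (hS k).measurableSet,
    fun {x C} hx hC => ?_⟩
  · refine ⟨stable_concatSet A fun k => (hS k).isCond.1, ?_,
      .iUnion fun k => (A.meas k).inter (hS k).isCond.2.2⟩
    rintro x ⟨y, hy, hxy⟩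
    exact hX.2.1 _ (hX.2.2 A y fun k => (hS k).isCond.2.1 (hy k)) x hxy.symm
  · have h_section : Prod.mk x ⁻¹' (⋃ k, Prod.snd ⁻¹' A.part k ∩ Z k) =
        ⋃ k, A.part k ∩ Prod.mk x ⁻¹' Z k := by
      rw [preimage_iUnion]
      rfl
    rw [h_section, A.ae_le_iUnion_part_inter_iff, CondMT.condConcat, memOn_concatSet_iff,
      A.ae_le_iUnion_part_inter_iff, ← forall_and]
    exact forall_congr' fun k => (hS k).ae_le_iff hx (hC.inter (A.meas k))

variable [SFinite P]

theorem Stable.represents_cInf (hX : Stable P X) (hZ : MeasurableSet[localMeasurableSpace P X] Z)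
    {s : Set (CondRaw Ω E)} (hs : ∀ T W, Represents P X T W →
      ((∀ S ∈ s, cle P T S) ↔ W ≤ᶠ[sectionAE P X] Z)) : Represents P X (cInf P X s) Z := by
  have hZ_rep := hX.represents_ofTruthSet hZ
  have h_inf : IsInfOf P X s (ofTruthSet P X Z) :=
    ⟨hZ_rep.isCond, (hs _ _ hZ_rep).2 .rfl, fun T hT h =>
      (hT.represents_truthSet.cle_iff hZ_rep).2 ((hs _ _ hT.represents_truthSet).1 h)⟩
  have h_exists : ∃ S, IsInfOf P X s S := ⟨_, h_inf⟩
  rw [cInf, dif_pos h_exists]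
  obtain ⟨h_cond, h_lower, h_greatest⟩ := h_exists.choose_spec
  exact hZ_rep.of_ceq h_cond
    ⟨h_greatest _ h_inf.1 h_inf.2.1, h_inf.2.2 _ h_cond h_lower⟩

theorem Stable.represents_cSup (hX : Stable P X) (hZ : MeasurableSet[localMeasurableSpace P X] Z)
    {s : Set (CondRaw Ω E)} (hs : ∀ T W, Represents P X T W →
      ((∀ S ∈ s, cle P S T) ↔ Z ≤ᶠ[sectionAE P X] W)) : Represents P X (cSup P X s) Z := by
  have hZ_rep := hX.represents_ofTruthSet hZ
  have h_sup : IsSupOf P X s (ofTruthSet P X Z) :=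
    ⟨hZ_rep.isCond, (hs _ _ hZ_rep).2 .rfl, fun T hT h =>
      (hZ_rep.cle_iff hT.represents_truthSet).2 ((hs _ _ hT.represents_truthSet).1 h)⟩
  have h_exists : ∃ S, IsSupOf P X s S := ⟨_, h_sup⟩
  rw [cSup, dif_pos h_exists]
  obtain ⟨h_cond, h_upper, h_least⟩ := h_exists.choose_spec
  exact hZ_rep.of_ceq h_cond
    ⟨h_sup.2.2 _ h_cond h_upper, h_least _ h_sup.1 h_sup.2.1⟩

theorem Represents.cInf₂ (hX : Stable P X) (hS : Represents P X S Z) (hT : Represents P X T W) :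
    Represents P X (cInf₂ P X S T) (Z ∩ W) := by
  refine hX.represents_cInf (hS.measurableSet.inter hT.measurableSet) fun R Q hR => ?_
  simp only [mem_insert_iff, mem_singleton_iff, forall_eq_or_imp, forall_eq, hR.cle_iff hS,
    hR.cle_iff hT, eventuallyLE_inter_iff]

theorem Represents.cSupFam (hX : Stable P X) {S : ℕ → CondRaw Ω E}
    {Z : ℕ → Set ((Ω → E) × Ω)} (hS : ∀ k, Represents P X (S k) (Z k)) :
    Represents P X (cSupFam P X S) (⋃ k, Z k) := by
  refine hX.represents_cSup (.iUnion fun k => (hS k).measurableSet) fun T W hT => ?_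
  rw [forall_mem_range, iUnion_eventuallyLE_iff]
  exact forall_congr' fun k => (hS k).cle_iff hT

theorem Represents.cdisjoint_iff (hX : Stable P X) (hS : Represents P X S Z)
    (hT : Represents P X T W) :
    cdisjoint P X S T ↔ (Z ∩ W : Set _) =ᶠ[sectionAE P X] (∅ : Set _) :=
  (hS.cInf₂ hX hT).ceq_iff hX.represents_cbot

theorem Represents.ccompl (hX : Stable P X) (hS : Represents P X S Z) :
    Represents P X (ccompl P X S) Zᶜ := by
  have h_disj {T : CondRaw Ω E} {W : Set _} (hT : Represents P X T W) :
      CondMT.cdisjoint P X T S ↔ W ≤ᶠ[sectionAE P X] Zᶜ := by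
    rw [hT.cdisjoint_iff hX hS, inter_eventuallyEq_empty_iff]
  refine hX.represents_cSup hS.measurableSet.compl fun T W hT => ⟨fun h => ?_, fun h R hR => ?_⟩
  · have hZ := hX.represents_ofTruthSet hS.measurableSet.compl
    exact (hZ.cle_iff hT).1 (h _ ⟨hZ.isCond, (h_disj hZ).2 .rfl⟩)
  · have hR_rep := hR.1.represents_truthSet
    exact (hR_rep.cle_iff hT).2 (((h_disj hR_rep).1 hR.2).trans h)

end Lattice

section Caratheodory

variable {Ω E : Type*} {mΩ : MeasurableSpace Ω} {P : Measure Ω} [SFinite P] {X : Set (Ω → E)}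
  {μ : CondRaw Ω E → Ω → ℝ≥0∞}

/-- The random outer measure on the local sets that corresponds to a stable outer measure on the
conditional power set. -/
def IsStableOuter.toRandomOuterMeasure (hμ : IsStableOuter P X μ) (hX : Stable P X) :
    RandomOuterMeasure (localMeasurableSpace P X) P where
  toFun Z := μ (ofTruthSet P X Z)
  measurable hZ := hμ.1 _ (hX.isCond_ofTruthSet hZ)
  empty := by
    have ⟨_, h_congr, _, h_restrict, _, _⟩ := hμ
    have h_bot := hX.represents_ofTruthSet (@MeasurableSet.empty _ (localMeasurableSpace P X))
    have h_bot' := h_bot.crestrict .empty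
    have h_eq := h_congr _ _ h_bot.isCond h_bot'.isCond
      ((h_bot.ceq_iff h_bot').2 (.of_eq (empty_inter _).symm))
    refine h_eq.trans ((h_restrict _ h_bot.isCond ∅ .empty).trans ?_)
    rw [indicator_empty]
    rfl
  mono hZ hW hZW := by
    have ⟨_, _, _, _, h_mono, _⟩ := hμ
    have hZ_rep := hX.represents_ofTruthSet hZ
    have hW_rep := hX.represents_ofTruthSet hW
    exact h_mono _ _ hZ_rep.isCond hW_rep.isCond
      ((hZ_rep.cle_iff hW_rep).2 (.of_forall hZW))
  iUnion_le {Z} hZ := by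
    have ⟨_, h_congr, _, _, _, h_iUnion_le⟩ := hμ
    have h_union := hX.represents_ofTruthSet (.iUnion hZ)
    have h_sup := Represents.cSupFam hX fun k => hX.represents_ofTruthSet (hZ k)
    have h_eq := h_congr _ _ h_union.isCond h_sup.isCond ((h_union.ceq_iff h_sup).2 .rfl)
    exact h_eq.le.trans (h_iUnion_le _ fun k => hX.isCond_ofTruthSet (hZ k))

theorem Represents.apply_ae_eq (hμ : IsStableOuter P X μ) (hX : Stable P X) {S : CondRaw Ω E}
    {Z : Set ((Ω → E) × Ω)} (hS : Represents P X S Z) :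
    μ S =ᵐ[P] hμ.toRandomOuterMeasure hX Z := by
  have hZ := hX.represents_ofTruthSet hS.measurableSet
  have ⟨_, h_congr, _⟩ := hμ
  exact h_congr _ _ hS.isCond hZ.isCond ((hS.ceq_iff hZ).2 .rfl)

theorem IsStableOuter.inter_snd_preimage_ae_eq (hμ : IsStableOuter P X μ) (hX : Stable P X)
    {Z : Set ((Ω → E) × Ω)} (hZ : MeasurableSet[localMeasurableSpace P X] Z) {B : Set Ω}
    (hB : MeasurableSet B) :
    hμ.toRandomOuterMeasure hX (Z ∩ Prod.snd ⁻¹' B) =ᵐ[P]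
      B.indicator (hμ.toRandomOuterMeasure hX Z) := by
  have hZ_rep := hX.represents_ofTruthSet hZ
  have ⟨_, _, _, h_restrict, _⟩ := hμ
  exact ((hZ_rep.crestrict hB).apply_ae_eq hμ hX).symm.trans (h_restrict _ hZ_rep.isCond B hB)

theorem IsStableOuter.measurableSet_caratheodory_snd_preimage (hμ : IsStableOuter P X μ)
    (hX : Stable P X) {B : Set Ω} (hB : MeasurableSet B) :
    MeasurableSet[(hμ.toRandomOuterMeasure hX).caratheodory] (Prod.snd ⁻¹' B) := by
  refine (RandomOuterMeasure.measurableSet_caratheodory_iff _).2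
    ⟨measurableSet_snd_preimage hB, fun W hW => ?_⟩
  have h_add := (hμ.inter_snd_preimage_ae_eq hX hW hB).add
    (hμ.inter_snd_preimage_ae_eq hX hW hB.compl)
  rwa [indicator_self_add_compl] at h_add

theorem Represents.caraMeasurable_iff (hμ : IsStableOuter P X μ) (hX : Stable P X)
    {S : CondRaw Ω E} {Z : Set ((Ω → E) × Ω)} (hS : Represents P X S Z) :
    CaraMeasurable P X μ S ↔ MeasurableSet[(hμ.toRandomOuterMeasure hX).caratheodory] Z := by
  rw [RandomOuterMeasure.measurableSet_caratheodory_iff, and_iff_right hS.measurableSet]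
  have h_split {T : CondRaw Ω E} {W : Set _} (hT : Represents P X T W) :
      (fun ω => μ (CondMT.cInf₂ P X T S) ω + μ (CondMT.cInf₂ P X T (CondMT.ccompl P X S)) ω) =ᵐ[P]
        hμ.toRandomOuterMeasure hX (W ∩ Z) + hμ.toRandomOuterMeasure hX (W \ Z) :=
    ((hT.cInf₂ hX hS).apply_ae_eq hμ hX).add ((hT.cInf₂ hX (hS.ccompl hX)).apply_ae_eq hμ hX)
  constructor
  · intro h W hW
    have hT := hX.represents_ofTruthSet hW
    exact (h_split hT).symm.trans (h _ hT.isCond)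
  · intro h T hT
    have hT_rep := hT.represents_truthSet
    exact (h_split hT_rep).trans
      ((h _ hT_rep.measurableSet).trans (hT_rep.apply_ae_eq hμ hX).symm)

theorem isStableSigma_caraMeasurable (hX : Stable P X) (hμ : IsStableOuter P X μ) :
    IsStableSigma P X {S | IsCond P X S ∧ CaraMeasurable P X μ S} := by
  have mem_of_measurableSet {S : CondRaw Ω E} {Z : Set _} (hS : Represents P X S Z)
      (hZ : MeasurableSet[(hμ.toRandomOuterMeasure hX).caratheodory] Z) :
      S ∈ {S | IsCond P X S ∧ CaraMeasurable P X μ S} :=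
    ⟨hS.isCond, (hS.caraMeasurable_iff hμ hX).2 hZ⟩
  have measurableSet_of_mem {S : CondRaw Ω E} (hS : IsCond P X S ∧ CaraMeasurable P X μ S) :
      MeasurableSet[(hμ.toRandomOuterMeasure hX).caratheodory] (truthSet P S) :=
    (hS.1.represents_truthSet.caraMeasurable_iff hμ hX).1 hS.2
  have h_top := mem_of_measurableSet hX.represents_ctop
    (@MeasurableSet.univ _ (hμ.toRandomOuterMeasure hX).caratheodory)
  refine ⟨⟨⟨_, h_top⟩, fun S hS => hS.1, fun S hS T hT hST => ?_, fun A S hS => ?_⟩, h_top,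
    fun S hS => ?_, fun S hS => ?_⟩
  · exact mem_of_measurableSet (hS.1.represents_truthSet.of_ceq hT hST) (measurableSet_of_mem hS)
  · exact mem_of_measurableSet
      (Represents.condConcat hX A fun k => (hS k).1.represents_truthSet)
      (.iUnion fun k => (hμ.measurableSet_caratheodory_snd_preimage hX (A.meas k)).inter
        (measurableSet_of_mem (hS k)))
  · exact mem_of_measurableSet (hS.1.represents_truthSet.ccompl hX) (measurableSet_of_mem hS).compl
  · exact mem_of_measurableSet
      (Represents.cSupFam hX fun k => (hS k).1.represents_truthSet)
      (.iUnion fun k => measurableSet_of_mem (hS k))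

theorem isStableMeasureOn_caraMeasurable (hX : Stable P X) (hμ : IsStableOuter P X μ) :
    IsStableMeasureOn P X {S | IsCond P X S ∧ CaraMeasurable P X μ S} μ := by
  have ⟨h_meas, h_congr, h_concat, h_restrict, _⟩ := hμ
  refine ⟨⟨fun S hS => h_meas S hS.1, fun S hS T hT => h_congr S T hS.1 hT.1,
    fun A S hS => h_concat A S fun k => (hS k).1⟩, fun S hS => ?_, fun S hS h_disj _ => ?_⟩
  · have h_eq := h_restrict S hS.1 S.2 hS.1.2.2
    rwa [crestrict, inter_self] at h_eq
  · have hS_rep k := (hS k).1.represents_truthSet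
    have h_null : Pairwise fun i j => hμ.toRandomOuterMeasure hX
        (truthSet P (S i) ∩ truthSet P (S j)) =ᵐ[P] 0 := fun i j hij => by
      have h_inter := (hS_rep i).cInf₂ hX (hS_rep j)
      have h_bot := hX.represents_cbot (P := P)
      exact (h_inter.apply_ae_eq hμ hX).symm.trans <|
        (h_congr _ _ h_inter.isCond h_bot.isCond (h_disj i j hij)).trans <|
          (h_bot.apply_ae_eq hμ hX).trans (hμ.toRandomOuterMeasure hX).empty
    have h_tsum := (hμ.toRandomOuterMeasure hX).iUnion_ae_eq_tsum
      (fun k => ((hS_rep k).caraMeasurable_iff hμ hX).1 (hS k).2) h_null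
    filter_upwards [(Represents.cSupFam hX hS_rep).apply_ae_eq hμ hX, h_tsum,
      ae_all_iff.2 fun k => (hS_rep k).apply_ae_eq hμ hX] with ω h_sup h_tsum h_apply
    rw [h_sup, h_tsum]
    exact tsum_congr fun k => (h_apply k).symm

end Caratheodory

theorem stableOuter_caratheodory_general {Ω E : Type*} [MeasurableSpace Ω] (P : Measure Ω)
    [SFinite P] (X : Set (Ω → E)) (hX : Stable P X) (μs : CondRaw Ω E → Ω → ℝ≥0∞)
    (hμs : IsStableOuter P X μs) :
    IsStableSigma P X {S | IsCond P X S ∧ CaraMeasurable P X μs S} ∧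
      IsStableMeasureOn P X {S | IsCond P X S ∧ CaraMeasurable P X μs S} μs :=
  ⟨isStableSigma_caraMeasurable hX hμs, isStableMeasureOn_caraMeasurable hX hμs⟩

/-- **Proposition 3.10 (conditional Carathéodory criterion).**  For a stable outer
measure `μ*` on the conditional power set of a stable set `X`, the collection of all
stably `μ*`-measurable conditional subsets is a stable σ-algebra, and the restriction
of `μ*` to this collection is a stable measure. -/
theorem stableOuter_caratheodory
    {Ω E : Type*} {mΩ : MeasurableSpace Ω} (P : @Measure Ω mΩ)
    [IsProbabilityMeasure P] (X : Set (Ω → E)) (hX : Stable P X)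
    (μs : CondRaw Ω E → Ω → ℝ≥0∞) (hμs : IsStableOuter P X μs) :
    IsStableSigma P X {S | IsCond P X S ∧ CaraMeasurable P X μs S} ∧
      IsStableMeasureOn P X {S | IsCond P X S ∧ CaraMeasurable P X μs S} μs := by
  exact stableOuter_caratheodory_general P X hX μs hμs

end CondMT
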